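/- Let S and A be nonempty finite types, P : S → A → PMF S a transition kernel, ρ0 a probability distribution on S, and γ ∈ [0,1). Let π and π' be policies with π(a|s) > 0 for all s, a, let σ ≥ 0, let R_e : S × A → ℝ and R_i : S × A → ℝ be reward functions, and set R = R_e + σ R_i. Let A_e, A_i, and A denote the advantage functions of π computed with rewards R_e, R_i, and R respectively (so that A = A_e + σ A_i), and set ε^{π'} = max_s |Σ_a π'(a|s) A(s,a)|. Suppose η ≥ 0 and Δ ∈ ℝ are such that Σ_s d^π(s) D_KL(π'(·|s)‖π(·|s)) ≤ η and Σ_s d^π(s) Σ_a π'(a|s) A_i(s,a) > 0. If σ ≥ (Σ_s d^π(s) Σ_a π'(a|s) A_i(s,a))^{-1} · [(1−γ)Δ − Σ_s d^π(s) Σ_a π'(a|s) A_e(s,a) + √(2η) γ ε^{π'}/(1−γ)], then J_R(π') − J_R(π) ≥ Δ. -/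

import Mathlib

open scoped BigOperators

section MDPdefs

variable {S A : Type*} [Fintype S] [Fintype A]

/-- The state-marginal distribution at time `t` under policy `π`:
`ρ_0 = ρ0` and `ρ_{t+1}(s') = ∑_s ∑_a ρ_t(s) π(a|s) P(s'|s,a)`. -/
noncomputable def stateMarginal (P : S → A → PMF S) (ρ0 : PMF S) (π : S → PMF A) :
    ℕ → S → ℝ
  | 0, s => (ρ0 s).toReal
  | t + 1, s' => ∑ s : S, ∑ a : A,
      stateMarginal P ρ0 π t s * (π s a).toReal * (P s a s').toReal

/-- The discounted state visitation distribution `d^π(s) = (1-γ) ∑_t γ^t ρ_t^π(s)`. -/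
noncomputable def dVisit (P : S → A → PMF S) (ρ0 : PMF S) (γ : ℝ) (π : S → PMF A)
    (s : S) : ℝ :=
  (1 - γ) * ∑' t : ℕ, γ ^ t * stateMarginal P ρ0 π t s

/-- The discounted return `J_R(π) = ∑_t γ^t ∑_s ∑_a ρ_t^π(s) π(a|s) R(s,a)`. -/
noncomputable def Jret (P : S → A → PMF S) (ρ0 : PMF S) (γ : ℝ) (π : S → PMF A)
    (R : S → A → ℝ) : ℝ :=
  ∑' t : ℕ, γ ^ t * ∑ s : S, ∑ a : A,
      stateMarginal P ρ0 π t s * (π s a).toReal * R s a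

/-- Total variational divergence between the action distributions of two policies at `s`. -/
noncomputable def dTV (π' π : S → PMF A) (s : S) : ℝ :=
  (1 / 2) * ∑ a : A, |(π' s a).toReal - (π s a).toReal|

/-- Value function of `π` with reward `R`: expected discounted return started at `s`. -/
noncomputable def Vval (P : S → A → PMF S) (γ : ℝ) (π : S → PMF A) (R : S → A → ℝ)
    (s : S) : ℝ :=
  Jret P (PMF.pure s) γ π R

/-- State-action value function `Q^π_R(s,a) = R(s,a) + γ ∑_{s'} P(s'|s,a) V^π_R(s')`. -/
noncomputable def Qval (P : S → A → PMF S) (γ : ℝ) (π : S → PMF A) (R : S → A → ℝ)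
    (s : S) (a : A) : ℝ :=
  R s a + γ * ∑ s' : S, (P s a s').toReal * Vval P γ π R s'

/-- Advantage function `A^π_R(s,a) = Q^π_R(s,a) - V^π_R(s)`. -/
noncomputable def Aadv (P : S → A → PMF S) (γ : ℝ) (π : S → PMF A) (R : S → A → ℝ)
    (s : S) (a : A) : ℝ :=
  Qval P γ π R s a - Vval P γ π R s

/-- Kullback–Leibler divergence between the action distributions at state `s`. -/
noncomputable def dKL (π' π : S → PMF A) (s : S) : ℝ :=
  ∑ a : A, (π' s a).toReal * Real.log ((π' s a).toReal / (π s a).toReal)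

end MDPdefs

/-!
Write `T_π` for the state transition matrix of `π` and `d` for `d^π`. The flow equation
`d = (1 - γ) ρ₀ + γ d T_π` has two consequences. Tested against the value function of another
policy, it gives the performance difference identity
`(1 - γ) (J(π') - J(π)) = ∑ₛ d^{π'}(s) ∑ₐ π'(a|s) A^π(s, a)`. Subtracting the equations of two
policies, it bounds the `ℓ¹` distance of `d^{π'}` and `d^π` by `2γ / (1 - γ)` times the
`d^π`-average of the total variation distance of the policies, which Pinsker's inequality and
Jensen's inequality bound by `√(η / 2)`. So replacing `d^{π'}` by `d^π` in the identity costs at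
most `√(2η) γ ε / (1 - γ)`, and since the advantage is linear in the reward, the hypothesis on `σ`
says exactly that what remains is at least `(1 - γ) Δ`.
-/

open InformationTheory Matrix

section Pinsker

lemma three_mul_sq_le_mul_klFun {x : ℝ} (hx : 0 ≤ x) :
    3 * (x - 1) ^ 2 ≤ 2 * (x + 2) * klFun x := by
  -- The difference `φ` of the two sides is convex, as `φ'' = 4 (log y + 1 / y - 1)`, and its
  -- derivative vanishes at `1`.
  let φ : ℝ → ℝ := fun y ↦ 2 * (y + 2) * klFun y - 3 * (y - 1) ^ 2
  let φ' : ℝ → ℝ := fun y ↦ 2 * klFun y + 2 * (y + 2) * Real.log y - 6 * (y - 1)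
  have hasDerivAt_φ (y : ℝ) (hy : 0 < y) : HasDerivAt φ (φ' y) y := by
    have h := ((((hasDerivAt_id y).add_const 2).const_mul 2).mul (hasDerivAt_klFun hy.ne')).sub
      ((((hasDerivAt_id y).sub_const 1).pow 2).const_mul 3)
    refine h.congr_deriv ?_
    simp only [φ', id]
    ring
  have hasDerivAt_φ' (y : ℝ) (hy : 0 < y) :
      HasDerivAt φ' (4 * (Real.log y - (1 - y⁻¹))) y := by
    have h := (((hasDerivAt_klFun hy.ne').const_mul 2).add
      ((((hasDerivAt_id y).add_const 2).const_mul 2).mul (Real.hasDerivAt_log hy.ne'))).sub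
      (((hasDerivAt_id y).sub_const 1).const_mul 6)
    refine h.congr_deriv ?_
    simp only [id]
    field
  have convexOn_φ : ConvexOn ℝ (Set.Ici 0) φ := by
    refine convexOn_of_hasDerivWithinAt2_nonneg (f' := φ')
      (f'' := fun y ↦ 4 * (Real.log y - (1 - y⁻¹))) (convex_Ici 0)
      (by fun_prop) ?_ ?_ ?_ <;> rw [interior_Ici] <;> intro y hy
    · exact (hasDerivAt_φ y hy).hasDerivWithinAt
    · exact (hasDerivAt_φ' y hy).hasDerivWithinAt
    · exact mul_nonneg (by norm_num) (sub_nonneg.2 (Real.one_sub_inv_le_log_of_pos hy))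
  have deriv_φ_one : derivWithin φ (Set.Ioi 1) 1 = 0 := by
    rw [(hasDerivAt_φ 1 one_pos).hasDerivWithinAt.derivWithin (uniqueDiffWithinAt_Ioi 1)]
    simp [φ', klFun_one]
  have φ_one_le : φ 1 ≤ φ x := convexOn_φ.isMinOn_of_rightDeriv_eq_zero (by simp) deriv_φ_one hx
  simpa [φ, klFun_one] using φ_one_le

lemma mul_klFun_div {p q : ℝ} (hpq : q = 0 → p = 0) :
    q * klFun (p / q) = p * Real.log (p / q) + q - p := by
  rcases eq_or_ne q 0 with hq | hq
  · simp [hq, hpq hq]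
  · rw [klFun_apply]
    field

lemma sq_sub_le_mul_klFun_div {p q : ℝ} (hp : 0 ≤ p) (hq : 0 ≤ q) (hpq : q = 0 → p = 0) :
    (p - q) ^ 2 ≤ 2 / 3 * (p + 2 * q) * (q * klFun (p / q)) := by
  rcases hq.eq_or_lt with hq | hq
  · simp [← hq, hpq hq.symm]
  · have h := mul_le_mul_of_nonneg_left (three_mul_sq_le_mul_klFun (div_nonneg hp hq.le))
      (sq_nonneg q)
    have hl : q ^ 2 * (3 * (p / q - 1) ^ 2) = 3 * (p - q) ^ 2 := by field
    have hr : q ^ 2 * (2 * (p / q + 2) * klFun (p / q)) =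
        2 * (p + 2 * q) * (q * klFun (p / q)) := by field
    linarith

/-- Pinsker's inequality. The proof is Cauchy–Schwarz with the weights `p i + 2 * q i`, whose sum
is `3`. -/
theorem sq_sum_abs_sub_le_two_mul_sum_mul_log_div {ι : Type*} (s : Finset ι) {p q : ι → ℝ}
    (hp : ∀ i ∈ s, 0 ≤ p i) (hq : ∀ i ∈ s, 0 ≤ q i) (hpq : ∀ i ∈ s, q i = 0 → p i = 0)
    (hp_sum : ∑ i ∈ s, p i = 1) (hq_sum : ∑ i ∈ s, q i = 1) :
    (∑ i ∈ s, |p i - q i|) ^ 2 ≤ 2 * ∑ i ∈ s, p i * Real.log (p i / q i) := by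
  have weights_sum : ∑ i ∈ s, 2 / 3 * (p i + 2 * q i) = 2 := by
    rw [← Finset.mul_sum, Finset.sum_add_distrib, ← Finset.mul_sum, hp_sum, hq_sum]
    norm_num
  have klFun_sum : ∑ i ∈ s, q i * klFun (p i / q i) = ∑ i ∈ s, p i * Real.log (p i / q i) := by
    rw [Finset.sum_congr rfl fun i hi ↦ mul_klFun_div (hpq i hi), Finset.sum_sub_distrib,
      Finset.sum_add_distrib, hp_sum, hq_sum, add_sub_cancel_right]
  calc (∑ i ∈ s, |p i - q i|) ^ 2
      ≤ (∑ i ∈ s, 2 / 3 * (p i + 2 * q i)) * ∑ i ∈ s, q i * klFun (p i / q i) := by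
        refine Finset.sum_sq_le_sum_mul_sum_of_sq_le_mul s (fun i hi ↦ ?_) (fun i hi ↦ ?_)
          fun i hi ↦ ?_
        · linarith [hp i hi, hq i hi]
        · exact mul_nonneg (hq i hi) (klFun_nonneg (div_nonneg (hp i hi) (hq i hi)))
        · rw [sq_abs]
          exact sq_sub_le_mul_klFun_div (hp i hi) (hq i hi) (hpq i hi)
    _ = 2 * ∑ i ∈ s, p i * Real.log (p i / q i) := by rw [weights_sum, klFun_sum]

end Pinsker

section FiniteSums

variable {m n : Type*} [Fintype m]

lemma sum_toReal_pmf (p : PMF m) : ∑ i, (p i).toReal = 1 := by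
  rw [← ENNReal.toReal_sum fun i _ ↦ p.apply_ne_top i, ← tsum_fintype (L := .unconditional m),
    p.tsum_coe, ENNReal.toReal_one]

lemma abs_dotProduct_le {x f : m → ℝ} {c : ℝ} (hf : ∀ i, |f i| ≤ c) :
    |x ⬝ᵥ f| ≤ (∑ i, |x i|) * c := by
  rw [Finset.sum_mul]
  refine (Finset.abs_sum_le_sum_abs _ _).trans (Finset.sum_le_sum fun i _ ↦ ?_)
  rw [abs_mul]
  exact mul_le_mul_of_nonneg_left (hf i) (abs_nonneg _)

lemma sum_abs_vecMul_le [Fintype n] (x : m → ℝ) (M : Matrix m n ℝ) :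
    ∑ j, |(x ᵥ* M) j| ≤ ∑ i, |x i| * ∑ j, |M i j| := by
  simp_rw [Finset.mul_sum]
  rw [Finset.sum_comm]
  refine Finset.sum_le_sum fun j _ ↦ (Finset.abs_sum_le_sum_abs _ _).trans_eq ?_
  simp_rw [abs_mul]

end FiniteSums

section Policies

variable {S A : Type*} [Fintype A]

/-- The expectation `∑ₐ π(a|s) f(s, a)` of `f s` over the actions of `π` in state `s`, as a vector
indexed by the states. -/
noncomputable def policyMean (π : S → PMF A) (f : S → A → ℝ) : S → ℝ :=
  fun s ↦ ∑ a, (π s a).toReal * f s a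

lemma policyMean_add_smul (π : S → PMF A) (f g : S → A → ℝ) (c : ℝ) :
    policyMean π (f + c • g) = policyMean π f + c • policyMean π g := by
  ext s
  simp only [policyMean, Pi.add_apply, Pi.smul_apply, smul_eq_mul, Finset.mul_sum,
    ← Finset.sum_add_distrib]
  exact Finset.sum_congr rfl fun a _ ↦ by ring

/-- The state transition matrix of the Markov chain that `π` induces: its entry at `(s, s')` is
`∑ₐ π(a|s) P(s'|s, a)`, so that distributions, as row vectors, evolve by `ᵥ*`. -/
noncomputable def policyTransition (P : S → A → PMF S) (π : S → PMF A) : Matrix S S ℝ :=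
  Matrix.of fun s s' ↦ ∑ a, (π s a).toReal * (P s a s').toReal

lemma policyTransition_nonneg (P : S → A → PMF S) (π : S → PMF A) (s s' : S) :
    0 ≤ policyTransition P π s s' :=
  Finset.sum_nonneg fun _ _ ↦ mul_nonneg ENNReal.toReal_nonneg ENNReal.toReal_nonneg

theorem two_mul_dTV_sq_le_dKL {π π' : S → PMF A} {s : S} (hac : ∀ a, π s a = 0 → π' s a = 0) :
    2 * dTV π' π s ^ 2 ≤ dKL π' π s := by
  have pinsker := sq_sum_abs_sub_le_two_mul_sum_mul_log_div Finset.univ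
    (p := fun a ↦ (π' s a).toReal) (q := fun a ↦ (π s a).toReal)
    (fun _ _ ↦ ENNReal.toReal_nonneg) (fun _ _ ↦ ENNReal.toReal_nonneg)
    (fun a _ ha ↦ by
      rw [hac a (((ENNReal.toReal_eq_zero_iff _).1 ha).resolve_right ((π s).apply_ne_top a)),
        ENNReal.toReal_zero])
    (sum_toReal_pmf _) (sum_toReal_pmf _)
  rw [dTV, dKL]
  linarith

variable [Fintype S]

lemma sum_policyTransition (P : S → A → PMF S) (π : S → PMF A) (s : S) :
    ∑ s', policyTransition P π s s' = 1 := by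
  simp only [policyTransition, Matrix.of_apply]
  rw [Finset.sum_comm]
  simp_rw [← Finset.mul_sum, sum_toReal_pmf, mul_one, sum_toReal_pmf]

lemma sum_abs_policyTransition_sub_le (P : S → A → PMF S) (π π' : S → PMF A) (s : S) :
    ∑ s', |(policyTransition P π' - policyTransition P π) s s'| ≤ 2 * dTV π' π s := by
  have row_eq : (policyTransition P π' - policyTransition P π) s =
      (fun a ↦ (π' s a).toReal - (π s a).toReal) ᵥ*
        Matrix.of fun a s' ↦ (P s a s').toReal := by
    ext s'
    simp only [policyTransition, Matrix.sub_apply, Matrix.of_apply, vecMul, dotProduct, sub_mul,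
      Finset.sum_sub_distrib]
  rw [row_eq]
  refine (sum_abs_vecMul_le _ _).trans_eq ?_
  simp only [Matrix.of_apply, abs_of_nonneg ENNReal.toReal_nonneg, sum_toReal_pmf, mul_one, dTV]
  ring

lemma policyMean_Aadv (P : S → A → PMF S) (γ : ℝ) (π π' : S → PMF A) (R : S → A → ℝ) :
    policyMean π' (Aadv P γ π R) = policyMean π' R +
      γ • (policyTransition P π' *ᵥ Vval P γ π R) - Vval P γ π R := by
  ext s
  have next_value : (policyTransition P π' *ᵥ Vval P γ π R) s =
      ∑ a, (π' s a).toReal * ∑ s', (P s a s').toReal * Vval P γ π R s' := by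
    simp only [mulVec, dotProduct, policyTransition, Matrix.of_apply, Finset.sum_mul,
      Finset.mul_sum]
    rw [Finset.sum_comm]
    simp only [mul_assoc]
  have value : Vval P γ π R s = ∑ a, (π' s a).toReal * Vval P γ π R s := by
    rw [← Finset.sum_mul, sum_toReal_pmf, one_mul]
  rw [Pi.sub_apply, Pi.add_apply, Pi.smul_apply, next_value, value, smul_eq_mul, Finset.mul_sum]
  simp only [policyMean, Aadv, Qval]
  rw [← Finset.sum_add_distrib, ← Finset.sum_sub_distrib]
  exact Finset.sum_congr rfl fun a _ ↦ by ring

end Policies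

section Visitation

variable {S A : Type*} [Fintype S] [Fintype A] (P : S → A → PMF S) (ρ0 : PMF S)
  {γ : ℝ} (π : S → PMF A)

lemma stateMarginal_succ (t : ℕ) :
    stateMarginal P ρ0 π (t + 1) = stateMarginal P ρ0 π t ᵥ* policyTransition P π := by
  ext s'
  simp only [stateMarginal, vecMul, dotProduct, policyTransition, Matrix.of_apply,
    Finset.mul_sum, mul_assoc]

lemma stateMarginal_nonneg (t : ℕ) (s : S) : 0 ≤ stateMarginal P ρ0 π t s := by
  induction t generalizing s with
  | zero => exact ENNReal.toReal_nonneg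
  | succ t ih =>
    rw [stateMarginal_succ]
    exact Finset.sum_nonneg fun s' _ ↦ mul_nonneg (ih s') (policyTransition_nonneg P π s' s)

lemma sum_stateMarginal (t : ℕ) : ∑ s, stateMarginal P ρ0 π t s = 1 := by
  induction t with
  | zero => exact sum_toReal_pmf ρ0
  | succ t ih =>
    simp only [stateMarginal_succ, vecMul, dotProduct]
    rw [Finset.sum_comm]
    simp_rw [← Finset.mul_sum, sum_policyTransition, mul_one, ih]

lemma stateMarginal_le_one (t : ℕ) (s : S) : stateMarginal P ρ0 π t s ≤ 1 :=
  (Finset.single_le_sum (fun s' _ ↦ stateMarginal_nonneg P ρ0 π t s')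
    (Finset.mem_univ s)).trans_eq (sum_stateMarginal P ρ0 π t)

lemma stateMarginal_dotProduct_eq_sum_pure (t : ℕ) (f : S → ℝ) :
    stateMarginal P ρ0 π t ⬝ᵥ f =
      ∑ s, (ρ0 s).toReal * (stateMarginal P (PMF.pure s) π t ⬝ᵥ f) := by
  classical
  induction t generalizing f with
  | zero => simp [dotProduct, stateMarginal, PMF.pure_apply, apply_ite ENNReal.toReal]
  | succ t ih => simp only [stateMarginal_succ, ← dotProduct_mulVec, ih (policyTransition P π *ᵥ f)]

lemma dVisit_nonneg (hγ0 : 0 ≤ γ) (hγ1 : γ < 1) (s : S) : 0 ≤ dVisit P ρ0 γ π s :=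
  mul_nonneg (sub_nonneg.2 hγ1.le)
    (tsum_nonneg fun t ↦ mul_nonneg (pow_nonneg hγ0 t) (stateMarginal_nonneg P ρ0 π t s))

lemma summable_pow_mul_stateMarginal (hγ0 : 0 ≤ γ) (hγ1 : γ < 1) (s : S) :
    Summable fun t ↦ γ ^ t * stateMarginal P ρ0 π t s :=
  Summable.of_nonneg_of_le
    (fun t ↦ mul_nonneg (pow_nonneg hγ0 t) (stateMarginal_nonneg P ρ0 π t s))
    (fun t ↦ mul_le_of_le_one_right (pow_nonneg hγ0 t) (stateMarginal_le_one P ρ0 π t s))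
    (summable_geometric_of_lt_one hγ0 hγ1)

theorem hasSum_pow_mul_stateMarginal_dotProduct (hγ0 : 0 ≤ γ) (hγ1 : γ < 1) (f : S → ℝ) :
    HasSum (fun t ↦ γ ^ t * (stateMarginal P ρ0 π t ⬝ᵥ f))
      ((1 - γ)⁻¹ * (dVisit P ρ0 γ π ⬝ᵥ f)) := by
  have hne : 1 - γ ≠ 0 := (sub_pos.2 hγ1).ne'
  have h := hasSum_sum (s := Finset.univ) fun s _ ↦
    (summable_pow_mul_stateMarginal P ρ0 π hγ0 hγ1 s).hasSum.mul_right (f s)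
  simpa only [dotProduct, dVisit, Finset.mul_sum, ← mul_assoc, inv_mul_cancel₀ hne, one_mul]
    using h

lemma sum_dVisit (hγ0 : 0 ≤ γ) (hγ1 : γ < 1) : ∑ s, dVisit P ρ0 γ π s = 1 := by
  have h := hasSum_pow_mul_stateMarginal_dotProduct P ρ0 π hγ0 hγ1 1
  simp only [dotProduct_one, sum_stateMarginal, mul_one] at h
  exact (mul_eq_left₀ (inv_pos.2 (sub_pos.2 hγ1)).ne').1
    (h.unique (hasSum_geometric_of_lt_one hγ0 hγ1))

theorem dVisit_eq_add_vecMul (hγ0 : 0 ≤ γ) (hγ1 : γ < 1) :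
    dVisit P ρ0 γ π = (1 - γ) • (fun s ↦ (ρ0 s).toReal) +
      γ • (dVisit P ρ0 γ π ᵥ* policyTransition P π) := by
  ext s
  have h : HasSum (fun t ↦ γ ^ t * stateMarginal P ρ0 π (t + 1) s)
      ((1 - γ)⁻¹ * (dVisit P ρ0 γ π ᵥ* policyTransition P π) s) := by
    simp only [stateMarginal_succ]
    exact hasSum_pow_mul_stateMarginal_dotProduct P ρ0 π hγ0 hγ1 fun s' ↦ policyTransition P π s' s
  have hne : 1 - γ ≠ 0 := (sub_pos.2 hγ1).ne'
  nth_rw 1 [dVisit]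
  rw [(summable_pow_mul_stateMarginal P ρ0 π hγ0 hγ1 s).tsum_eq_zero_add]
  simp only [pow_succ', mul_assoc, tsum_mul_left, h.tsum_eq, pow_zero, one_mul, Pi.add_apply,
    Pi.smul_apply, smul_eq_mul]
  rw [stateMarginal]
  field

lemma dVisit_sub_dVisit (hγ0 : 0 ≤ γ) (hγ1 : γ < 1) (π' : S → PMF A) :
    dVisit P ρ0 γ π' - dVisit P ρ0 γ π =
      γ • ((dVisit P ρ0 γ π' - dVisit P ρ0 γ π) ᵥ* policyTransition P π' +
        dVisit P ρ0 γ π ᵥ* (policyTransition P π' - policyTransition P π)) := by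
  nth_rw 1 [dVisit_eq_add_vecMul P ρ0 π hγ0 hγ1, dVisit_eq_add_vecMul P ρ0 π' hγ0 hγ1]
  rw [sub_vecMul, vecMul_sub, sub_add_sub_cancel, add_sub_add_left_eq_sub, smul_sub]

/-- `T_{π'}` does not increase the `ℓ¹` norm, so the first term of `dVisit_sub_dVisit` can be
absorbed into the left-hand side. -/
theorem sum_abs_dVisit_sub_le (hγ0 : 0 ≤ γ) (hγ1 : γ < 1) (π' : S → PMF A) :
    (1 - γ) * ∑ s, |(dVisit P ρ0 γ π' - dVisit P ρ0 γ π) s| ≤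
      2 * γ * ∑ s, dVisit P ρ0 γ π s * dTV π' π s := by
  have sub_eq := dVisit_sub_dVisit P ρ0 π hγ0 hγ1 π'
  set d := dVisit P ρ0 γ π
  set d' := dVisit P ρ0 γ π'
  set T := policyTransition P π
  set T' := policyTransition P π'
  have sum_abs_transported : ∑ s, |((d' - d) ᵥ* T') s| ≤ ∑ s, |(d' - d) s| := by
    refine (sum_abs_vecMul_le _ _).trans_eq (Finset.sum_congr rfl fun s _ ↦ ?_)
    simp only [T', abs_of_nonneg (policyTransition_nonneg P π' _ _), sum_policyTransition, mul_one]
  have sum_abs_perturbed : ∑ s, |(d ᵥ* (T' - T)) s| ≤ 2 * ∑ s, d s * dTV π' π s := by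
    refine (sum_abs_vecMul_le _ _).trans ?_
    rw [Finset.mul_sum]
    refine Finset.sum_le_sum fun s _ ↦ ?_
    rw [abs_of_nonneg (dVisit_nonneg P ρ0 π hγ0 hγ1 s), mul_left_comm]
    exact mul_le_mul_of_nonneg_left (sum_abs_policyTransition_sub_le P π π' s)
      (dVisit_nonneg P ρ0 π hγ0 hγ1 s)
  have contraction : ∑ s, |(d' - d) s| ≤
      γ * (∑ s, |(d' - d) s| + 2 * ∑ s, d s * dTV π' π s) :=
    calc ∑ s, |(d' - d) s|
        = γ * ∑ s, |((d' - d) ᵥ* T') s + (d ᵥ* (T' - T)) s| := by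
          nth_rw 1 [sub_eq]
          simp only [Pi.smul_apply, Pi.add_apply, smul_eq_mul, abs_mul, abs_of_nonneg hγ0,
            Finset.mul_sum]
      _ ≤ γ * (∑ s, |((d' - d) ᵥ* T') s| + ∑ s, |(d ᵥ* (T' - T)) s|) := by
          rw [← Finset.sum_add_distrib]
          gcongr
          exact abs_add_le _ _
      _ ≤ γ * (∑ s, |(d' - d) s| + 2 * ∑ s, d s * dTV π' π s) := by gcongr
  linarith

lemma sum_dVisit_mul_dTV_le_sqrt (hγ0 : 0 ≤ γ) (hγ1 : γ < 1) {π' : S → PMF A}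
    (hac : ∀ s a, π s a = 0 → π' s a = 0) :
    2 * ∑ s, dVisit P ρ0 γ π s * dTV π' π s ≤
      √(2 * ∑ s, dVisit P ρ0 γ π s * dKL π' π s) := by
  have hd := dVisit_nonneg P ρ0 π hγ0 hγ1
  have jensen : (∑ s, dVisit P ρ0 γ π s * dTV π' π s) ^ 2 ≤
      ∑ s, dVisit P ρ0 γ π s * dTV π' π s ^ 2 :=
    Real.pow_arith_mean_le_arith_mean_pow_of_even _ _ _ (fun s _ ↦ hd s)
      (sum_dVisit P ρ0 π hγ0 hγ1) even_two
  have pinsker : 2 * ∑ s, dVisit P ρ0 γ π s * dTV π' π s ^ 2 ≤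
      ∑ s, dVisit P ρ0 γ π s * dKL π' π s := by
    rw [Finset.mul_sum]
    refine Finset.sum_le_sum fun s _ ↦ ?_
    rw [mul_left_comm]
    exact mul_le_mul_of_nonneg_left (two_mul_dTV_sq_le_dKL (hac s)) (hd s)
  apply Real.le_sqrt_of_sq_le
  linarith

end Visitation

section Return

variable {S A : Type*} [Fintype S] [Fintype A] (P : S → A → PMF S) (ρ0 : PMF S)
  {γ : ℝ} (π : S → PMF A)

lemma hasSum_Jret (hγ0 : 0 ≤ γ) (hγ1 : γ < 1) (R : S → A → ℝ) :
    HasSum (fun t ↦ γ ^ t * (stateMarginal P ρ0 π t ⬝ᵥ policyMean π R)) (Jret P ρ0 γ π R) := by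
  have h := (hasSum_pow_mul_stateMarginal_dotProduct P ρ0 π hγ0 hγ1 (policyMean π R)).summable
  simpa only [Jret, dotProduct, policyMean, Finset.mul_sum, mul_assoc] using h.hasSum

lemma one_sub_mul_Jret (hγ0 : 0 ≤ γ) (hγ1 : γ < 1) (R : S → A → ℝ) :
    (1 - γ) * Jret P ρ0 γ π R = dVisit P ρ0 γ π ⬝ᵥ policyMean π R := by
  rw [(hasSum_Jret P ρ0 π hγ0 hγ1 R).unique
    (hasSum_pow_mul_stateMarginal_dotProduct P ρ0 π hγ0 hγ1 (policyMean π R)),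
    mul_inv_cancel_left₀ (sub_pos.2 hγ1).ne']

lemma Jret_eq_dotProduct_Vval (hγ0 : 0 ≤ γ) (hγ1 : γ < 1) (R : S → A → ℝ) :
    Jret P ρ0 γ π R = (fun s ↦ (ρ0 s).toReal) ⬝ᵥ Vval P γ π R := by
  have h := hasSum_sum (s := Finset.univ) fun s _ ↦
    (hasSum_Jret P (PMF.pure s) π hγ0 hγ1 R).mul_left (ρ0 s).toReal
  refine (hasSum_Jret P ρ0 π hγ0 hγ1 R).unique (h.congr_fun ?_)
  intro t
  rw [stateMarginal_dotProduct_eq_sum_pure, Finset.mul_sum]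
  exact Finset.sum_congr rfl fun s _ ↦ mul_left_comm _ _ _

lemma Jret_add_smul (hγ0 : 0 ≤ γ) (hγ1 : γ < 1) (R R' : S → A → ℝ) (c : ℝ) :
    Jret P ρ0 γ π (R + c • R') = Jret P ρ0 γ π R + c * Jret P ρ0 γ π R' := by
  refine mul_left_cancel₀ (sub_pos.2 hγ1).ne' ?_
  rw [mul_add, mul_left_comm]
  simp only [one_sub_mul_Jret P ρ0 π hγ0 hγ1, policyMean_add_smul, dotProduct_add, dotProduct_smul,
    smul_eq_mul]

lemma Aadv_add_smul (hγ0 : 0 ≤ γ) (hγ1 : γ < 1) (R R' : S → A → ℝ) (c : ℝ) :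
    Aadv P γ π (R + c • R') = Aadv P γ π R + c • Aadv P γ π R' := by
  ext s a
  simp only [Aadv, Qval, Vval, Jret_add_smul _ _ _ hγ0 hγ1, Pi.add_apply, Pi.smul_apply,
    smul_eq_mul, mul_add, Finset.sum_add_distrib, mul_left_comm _ c, ← Finset.mul_sum]
  ring

theorem one_sub_mul_Jret_sub_Jret (hγ0 : 0 ≤ γ) (hγ1 : γ < 1) (R : S → A → ℝ) (π' : S → PMF A) :
    (1 - γ) * (Jret P ρ0 γ π' R - Jret P ρ0 γ π R) =
      dVisit P ρ0 γ π' ⬝ᵥ policyMean π' (Aadv P γ π R) := by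
  set d' := dVisit P ρ0 γ π' with hd'
  set V := Vval P γ π R
  have flow : d' ⬝ᵥ V = (1 - γ) * Jret P ρ0 γ π R +
      γ * (d' ᵥ* policyTransition P π' ⬝ᵥ V) := by
    nth_rw 1 [hd', dVisit_eq_add_vecMul P ρ0 π' hγ0 hγ1]
    rw [Jret_eq_dotProduct_Vval P ρ0 π hγ0 hγ1 R, add_dotProduct, smul_dotProduct, smul_dotProduct,
      smul_eq_mul, smul_eq_mul]
  rw [policyMean_Aadv, dotProduct_sub, dotProduct_add, dotProduct_smul, smul_eq_mul,
    dotProduct_mulVec, ← one_sub_mul_Jret P ρ0 π' hγ0 hγ1, flow]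
  ring

theorem sub_le_one_sub_mul_Jret_sub_Jret (hγ0 : 0 ≤ γ) (hγ1 : γ < 1) (R : S → A → ℝ)
    {π' : S → PMF A} (hac : ∀ s a, π s a = 0 → π' s a = 0) :
    dVisit P ρ0 γ π ⬝ᵥ policyMean π' (Aadv P γ π R) -
        √(2 * ∑ s, dVisit P ρ0 γ π s * dKL π' π s) * γ *
          (⨆ s, |policyMean π' (Aadv P γ π R) s|) / (1 - γ) ≤
      (1 - γ) * (Jret P ρ0 γ π' R - Jret P ρ0 γ π R) := by
  set f := policyMean π' (Aadv P γ π R)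
  set ε := ⨆ s, |f s|
  set d := dVisit P ρ0 γ π
  set d' := dVisit P ρ0 γ π'
  have hε : 0 ≤ ε := Real.iSup_nonneg fun s ↦ abs_nonneg _
  have visitation_shift : ∑ s, |(d' - d) s| ≤ √(2 * ∑ s, d s * dKL π' π s) * γ / (1 - γ) := by
    rw [le_div_iff₀' (sub_pos.2 hγ1)]
    calc (1 - γ) * ∑ s, |(d' - d) s|
        ≤ 2 * γ * ∑ s, d s * dTV π' π s := sum_abs_dVisit_sub_le P ρ0 π hγ0 hγ1 π'
      _ = 2 * (∑ s, d s * dTV π' π s) * γ := by ring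
      _ ≤ √(2 * ∑ s, d s * dKL π' π s) * γ := by
          gcongr
          exact sum_dVisit_mul_dTV_le_sqrt P ρ0 π hγ0 hγ1 hac
  have advantage_shift : |(d' - d) ⬝ᵥ f| ≤ √(2 * ∑ s, d s * dKL π' π s) * γ * ε / (1 - γ) :=
    calc |(d' - d) ⬝ᵥ f|
        ≤ (∑ s, |(d' - d) s|) * ε :=
          abs_dotProduct_le fun s ↦ le_ciSup (f := fun s ↦ |f s|) (Set.finite_range _).bddAbove s
      _ ≤ √(2 * ∑ s, d s * dKL π' π s) * γ / (1 - γ) * ε := by gcongr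
      _ = √(2 * ∑ s, d s * dKL π' π s) * γ * ε / (1 - γ) := by ring
  rw [one_sub_mul_Jret_sub_Jret P ρ0 π hγ0 hγ1]
  rw [sub_dotProduct] at advantage_shift
  linarith [neg_le_of_abs_le advantage_shift]

end Return

theorem tace_corollary_two_general
    {S A : Type*} [Fintype S] [Fintype A] (P : S → A → PMF S) (ρ0 : PMF S)
    {γ : ℝ} (hγ0 : 0 ≤ γ) (hγ1 : γ < 1) {π π' : S → PMF A}
    (hac : ∀ s a, π s a = 0 → π' s a = 0) {σ : ℝ} (Re Ri : S → A → ℝ) {η Δ : ℝ}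
    (hKL : ∑ s, dVisit P ρ0 γ π s * dKL π' π s ≤ η)
    (hAi : 0 < dVisit P ρ0 γ π ⬝ᵥ policyMean π' (Aadv P γ π Ri))
    (hσ : (dVisit P ρ0 γ π ⬝ᵥ policyMean π' (Aadv P γ π Ri))⁻¹ *
        ((1 - γ) * Δ - dVisit P ρ0 γ π ⬝ᵥ policyMean π' (Aadv P γ π Re) +
          √(2 * η) * γ * (⨆ s, |policyMean π' (Aadv P γ π (Re + σ • Ri)) s|) / (1 - γ)) ≤ σ) :
    Δ ≤ Jret P ρ0 γ π' (Re + σ • Ri) - Jret P ρ0 γ π (Re + σ • Ri) := by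
  set ε := ⨆ s, |policyMean π' (Aadv P γ π (Re + σ • Ri)) s|
  have hε : 0 ≤ ε := Real.iSup_nonneg fun s ↦ abs_nonneg _
  have hγ : 0 < 1 - γ := sub_pos.2 hγ1
  have improvement := sub_le_one_sub_mul_Jret_sub_Jret P ρ0 π hγ0 hγ1 (Re + σ • Ri) hac
  have advantage_split : dVisit P ρ0 γ π ⬝ᵥ policyMean π' (Aadv P γ π (Re + σ • Ri)) =
      dVisit P ρ0 γ π ⬝ᵥ policyMean π' (Aadv P γ π Re) +
        dVisit P ρ0 γ π ⬝ᵥ policyMean π' (Aadv P γ π Ri) * σ := by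
    rw [Aadv_add_smul P π hγ0 hγ1, policyMean_add_smul, dotProduct_add, dotProduct_smul,
      smul_eq_mul, mul_comm σ]
  have penalty_le : √(2 * ∑ s, dVisit P ρ0 γ π s * dKL π' π s) * γ * ε / (1 - γ) ≤
      √(2 * η) * γ * ε / (1 - γ) := by gcongr
  rw [inv_mul_le_iff₀ hAi] at hσ
  exact le_of_mul_le_mul_left (by linarith) hγ

/-- Corollary 2: a lower bound on the Lagrange multiplier σ guaranteeing the
performance improvement `J_R(π') − J_R(π) ≥ Δ`. -/
theorem tace_corollary_two
    {S A : Type*} [Fintype S] [Fintype A] [Nonempty S] [Nonempty A]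
    (P : S → A → PMF S) (ρ0 : PMF S) (γ : ℝ) (hγ0 : 0 ≤ γ) (hγ1 : γ < 1)
    (π π' : S → PMF A) (hπpos : ∀ s a, 0 < (π s a).toReal)
    (σ : ℝ) (hσ : 0 ≤ σ) (Re Ri : S → A → ℝ) (η Δ : ℝ) (hη : 0 ≤ η) :
    let R : S → A → ℝ := fun s a => Re s a + σ * Ri s a
    let ε : ℝ := ⨆ s : S, |∑ a : A, (π' s a).toReal * Aadv P γ π R s a|
    ∀ _hKL : ∑ s : S, dVisit P ρ0 γ π s * dKL π' π s ≤ η,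
    ∀ _hAi : 0 < ∑ s : S, dVisit P ρ0 γ π s * ∑ a : A, (π' s a).toReal * Aadv P γ π Ri s a,
    ∀ _hσge : σ ≥
        (∑ s : S, dVisit P ρ0 γ π s * ∑ a : A, (π' s a).toReal * Aadv P γ π Ri s a)⁻¹ *
          ((1 - γ) * Δ -
            (∑ s : S, dVisit P ρ0 γ π s * ∑ a : A, (π' s a).toReal * Aadv P γ π Re s a) +
            Real.sqrt (2 * η) * γ * ε / (1 - γ)),
    Jret P ρ0 γ π' R - Jret P ρ0 γ π R ≥ Δ := by
  intro R ε hKL hAi hσge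
  have hac (s : S) (a : A) (h : π s a = 0) : π' s a = 0 :=
    absurd (hπpos s a) (by simp [h])
  exact tace_corollary_two_general P ρ0 hγ0 hγ1 hac Re Ri hKL hAi hσge
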